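/- arXiv:2604.06122 — 2 statements merged into one kernel-verified Lean document; each statement's English description precedes it below -/
import Mathlib

section
/- Fix ε ∈ (0,1/2) and m ∈ [−1+2ε, 1−2ε]. If h ∈ L^ε_n and λ > 0, then (4/(n⁶ε⁴))·(Γ_n(h) + M_n(h,λ) − λM'_n(h,λ))² ≤ 2π M''_n(h,λ) ≤ n^{3/2}. Moreover, for any λ, λ' ∈ ℝ, |M''_n(h,λ) − M''_n(h,λ')| ≤ 2(Σ_{i=1}^n |h_i|³)·|λ − λ'|. -/
open MeasureTheory Real Filter Set
open scoped Topology BigOperators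

noncomputable section

/-- `g(λ) = log(((1+m)/2)e^{λ(1−m)} + ((1−m)/2)e^{−λ(1+m)})`. -/
def gfun (m lam : ℝ) : ℝ :=
  Real.log ((1 + m) / 2 * Real.exp (lam * (1 - m)) + (1 - m) / 2 * Real.exp (-(lam * (1 + m))))

/-- `M_n(h,λ) = Σ_{i=1}^n g(λ h_i)`. -/
def Mn (m : ℝ) (n : ℕ) (hs : ℕ → ℝ) (lam : ℝ) : ℝ :=
  ∑ i ∈ Finset.range n, gfun m (lam * hs i)

/-- `Σ_n(h) = −m Σ_{i=1}^n h_i + Σ_{i=1}^n |h_i|`. -/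
def SigmaN (m : ℝ) (n : ℕ) (hs : ℕ → ℝ) : ℝ :=
  -m * ∑ i ∈ Finset.range n, hs i + ∑ i ∈ Finset.range n, |hs i|

/-- `Γ_n(h) = −Σ_{i=1}^n log(1 + sign(h_i) m) + n log 2`. -/
def GammaN (m : ℝ) (n : ℕ) (hs : ℕ → ℝ) : ℝ :=
  -(∑ i ∈ Finset.range n, Real.log (1 + Real.sign (hs i) * m)) + n * Real.log 2

/-- The set `L^ε_n` of good disorder configurations. -/
def Lset (m ε : ℝ) (n : ℕ) : Set (ℕ → ℝ) :=
  {hs | 2 * π * ∑ i ∈ Finset.range n, (hs i) ^ 2 ≤ (n : ℝ) ^ ((3:ℝ)/2) ∧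
    (∀ i < n, 16 / ((n : ℝ)^5 * ε^8) ≤ 2 * π * (hs i)^2) ∧
    SigmaN m n hs ∈ Set.Ioo ((n : ℝ) ^ ((4:ℝ)/5)) ((n : ℝ) ^ ((3:ℝ)/2))}

/-!
Writing `m = tanh a` turns the tilt into a translation:
`g(x) = log cosh (a + x) - log cosh a - x tanh a`, so that `g'(x) = tanh (a + x) - tanh a` and
`g''(x) = 1 / cosh² (a + x)`. As `1 / cosh²` is at most `1` and `2`-Lipschitz, the upper bound and
the Lipschitz estimate follow by summation. For the lower bound, `Γ_n + M_n - λ M'_n` is a sum of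
gaps between two relative entropies, each at most a constant (depending on `m`) times
`1 / cosh (a + λ h_i)`; Cauchy–Schwarz then compares the squared sum with `M''_n`.
-/

lemma one_add_tanh (x : ℝ) : 1 + tanh x = exp x / cosh x := by
  rw [tanh_eq_sinh_div_cosh, ← cosh_add_sinh, add_div, div_self (cosh_pos x).ne']

lemma one_sub_tanh (x : ℝ) : 1 - tanh x = exp (-x) / cosh x := by
  rw [sub_eq_add_neg, ← tanh_neg, one_add_tanh, cosh_neg]

lemma hasDerivAt_tanh (x : ℝ) : HasDerivAt tanh (1 / cosh x ^ 2) x := by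
  have quotient := (hasDerivAt_sinh x).div (hasDerivAt_cosh x) (cosh_pos x).ne'
  rw [← sq, ← sq, cosh_sq_sub_sinh_sq] at quotient
  exact quotient.congr_of_eventuallyEq (.of_forall tanh_eq_sinh_div_cosh)

lemma monotone_tanh : Monotone tanh :=
  monotone_of_hasDerivAt_nonneg hasDerivAt_tanh fun x ↦ one_div_nonneg.2 (sq_nonneg (cosh x))

lemma hasDerivAt_log_cosh (x : ℝ) : HasDerivAt (fun y ↦ log (cosh y)) (tanh x) x := by
  simpa only [tanh_eq_sinh_div_cosh] using (hasDerivAt_cosh x).log (cosh_pos x).ne'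

lemma one_div_cosh_sq_le_one (x : ℝ) : 1 / cosh x ^ 2 ≤ 1 :=
  div_le_one_of_le₀ (one_le_pow₀ (one_le_cosh x)) (sq_nonneg _)

lemma hasDerivAt_one_div_cosh_sq (x : ℝ) :
    HasDerivAt (fun y ↦ 1 / cosh y ^ 2) (-2 * tanh x * (1 / cosh x ^ 2)) x := by
  have cosh_ne := (cosh_pos x).ne'
  simp only [one_div, tanh_eq_sinh_div_cosh]
  refine (((hasDerivAt_cosh x).fun_pow 2).fun_inv (pow_ne_zero 2 cosh_ne)).congr_deriv ?_
  field_simp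
  ring

lemma abs_one_div_cosh_sq_sub_le (x y : ℝ) :
    |1 / cosh x ^ 2 - 1 / cosh y ^ 2| ≤ 2 * |x - y| := by
  refine convex_univ.norm_image_sub_le_of_norm_hasDerivWithin_le
    (fun z _ ↦ (hasDerivAt_one_div_cosh_sq z).hasDerivWithinAt) (fun z _ ↦ ?_)
    (mem_univ y) (mem_univ x)
  calc ‖-2 * tanh z * (1 / cosh z ^ 2)‖
      = 2 * |tanh z| * (1 / cosh z ^ 2) := by
        rw [norm_eq_abs, abs_mul, abs_mul, abs_neg, abs_two, abs_of_pos (a := 1 / cosh z ^ 2)]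
        have := cosh_pos z
        positivity
    _ ≤ 2 * 1 * 1 := by
        gcongr
        · exact (abs_tanh_lt_one z).le
        · exact one_div_cosh_sq_le_one z
    _ = 2 := by norm_num

lemma log_one_add_sq_le {t : ℝ} (ht : 0 ≤ t) : log (1 + t ^ 2) ≤ 2 * t :=
  calc log (1 + t ^ 2) ≤ log ((1 + t) ^ 2) := log_le_log (by positivity) (by nlinarith)
    _ = 2 * log (1 + t) := by rw [log_pow, Nat.cast_two]
    _ ≤ 2 * t := by linarith [log_le_sub_one_of_pos (show 0 < 1 + t by positivity)]

lemma log_two_add_log_cosh (x : ℝ) : log 2 + log (cosh x) = x + log (1 + exp (-x) ^ 2) := by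
  have two_mul_cosh : 2 * cosh x = exp x * (1 + exp (-x) ^ 2) := by
    rw [cosh_eq, exp_neg]
    field_simp
  rw [← log_mul two_ne_zero (cosh_pos x).ne', two_mul_cosh,
    log_mul (exp_pos x).ne' (by positivity), log_exp]

lemma mul_exp_neg_le_one (x : ℝ) : x * exp (-x) ≤ 1 := by
  rw [exp_neg, ← div_eq_mul_inv, div_le_one (exp_pos x)]
  linarith [add_one_le_exp x]

lemma gfun_neg_neg (m x : ℝ) : gfun (-m) (-x) = gfun m x := by
  unfold gfun
  ring_nf

lemma deriv_gfun_neg_neg (m x : ℝ) : deriv (gfun (-m)) (-x) = -deriv (gfun m) x := by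
  have reflected : gfun m = fun y ↦ gfun (-m) (-y) := funext fun y ↦ (gfun_neg_neg m y).symm
  rw [reflected, deriv_comp_neg, neg_neg]

lemma gfun_tanh (a x : ℝ) :
    gfun (tanh a) x = log (cosh (a + x)) - log (cosh a) - x * tanh a := by
  have cosh_ne := (cosh_pos a).ne'
  have tilted : (1 + tanh a) / 2 * exp (x * (1 - tanh a)) +
      (1 - tanh a) / 2 * exp (-(x * (1 + tanh a))) =
        cosh (a + x) / cosh a * exp (-(x * tanh a)) := by
    rw [show x * (1 - tanh a) = x + -(x * tanh a) by ring,
      show -(x * (1 + tanh a)) = -x + -(x * tanh a) by ring, one_add_tanh, one_sub_tanh,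
      cosh_eq (a + x), neg_add, exp_add, exp_add, exp_add, exp_add]
    ring
  rw [gfun, tilted, log_mul (div_ne_zero (cosh_pos _).ne' cosh_ne) (exp_pos _).ne',
    log_div (cosh_pos _).ne' cosh_ne, log_exp, sub_eq_add_neg _ (x * tanh a)]

lemma hasDerivAt_gfun_tanh (a x : ℝ) :
    HasDerivAt (gfun (tanh a)) (tanh (a + x) - tanh a) x := by
  have formula := (((hasDerivAt_log_cosh (a + x)).comp_const_add a x).sub_const
    (log (cosh a))).fun_sub (hasDerivAt_mul_const (tanh a))
  exact formula.congr_of_eventuallyEq (.of_forall (gfun_tanh a))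

/-- The amount `log (2 / (1 + s m)) - (x g'(x) - g(x))` by which, for `s = ±1`, the relative entropy
of the point mass at `s` exceeds that of the law tilted by `x`, both relative to the law on `{±1}`
with mean `m`. The sign `s` is a separate argument because `Γ_n` involves the sign of `h_i` whereas
the tilt is `λ h_i`. -/
def entropyGap (m s x : ℝ) : ℝ :=
  log 2 - log (1 + s * m) + gfun m x - x * deriv (gfun m) x

lemma entropyGap_neg_neg_neg (m s x : ℝ) : entropyGap (-m) (-s) (-x) = entropyGap m s x := by
  rw [entropyGap, entropyGap, neg_mul_neg, gfun_neg_neg, deriv_gfun_neg_neg, neg_mul_neg]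

lemma entropyGap_tanh_one (a x : ℝ) :
    entropyGap (tanh a) 1 x =
      log (1 + exp (-(a + x)) ^ 2) + x * (exp (-(a + x)) / cosh (a + x)) := by
  rw [entropyGap, one_mul, one_add_tanh, log_div (exp_pos a).ne' (cosh_pos a).ne', log_exp,
    gfun_tanh, (hasDerivAt_gfun_tanh a x).deriv, ← one_sub_tanh]
  linear_combination log_two_add_log_cosh (a + x)

lemma entropyGap_tanh_one_nonneg (a : ℝ) {x : ℝ} (hx : 0 ≤ x) :
    0 ≤ entropyGap (tanh a) 1 x := by
  have := cosh_pos (a + x)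
  have log_term_nonneg : 0 ≤ log (1 + exp (-(a + x)) ^ 2) :=
    log_nonneg (le_add_of_nonneg_right (sq_nonneg _))
  rw [entropyGap_tanh_one]
  positivity

lemma one_add_tanh_mul_entropyGap_tanh_one_le (a : ℝ) {x : ℝ} (hx : 0 ≤ x) :
    (1 + tanh a) * entropyGap (tanh a) 1 x ≤ 3 / cosh (a + x) := by
  have := cosh_pos (a + x)
  have log_part : (1 + tanh a) * log (1 + exp (-(a + x)) ^ 2) ≤ 2 / cosh (a + x) :=
    calc (1 + tanh a) * log (1 + exp (-(a + x)) ^ 2)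
        ≤ (1 + tanh (a + x)) * (2 * exp (-(a + x))) := by
          gcongr
          · exact log_nonneg (le_add_of_nonneg_right (sq_nonneg _))
          · linarith [neg_one_lt_tanh (a + x)]
          · exact monotone_tanh (le_add_of_nonneg_right hx)
          · exact log_one_add_sq_le (exp_pos _).le
      _ = 2 / cosh (a + x) := by
          rw [one_add_tanh, exp_neg]
          field_simp
  have linear_part : (1 + tanh a) * (x * exp (-(a + x))) ≤ 1 :=
    calc (1 + tanh a) * (x * exp (-(a + x))) = x * exp (-x) / cosh a := by
          rw [one_add_tanh, neg_add, exp_add, exp_neg a]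
          field_simp
      _ ≤ 1 := div_le_one_of_le₀ ((mul_exp_neg_le_one x).trans (one_le_cosh a)) (cosh_pos a).le
  calc (1 + tanh a) * entropyGap (tanh a) 1 x
      = (1 + tanh a) * log (1 + exp (-(a + x)) ^ 2) +
          (1 + tanh a) * (x * exp (-(a + x))) / cosh (a + x) := by
        rw [entropyGap_tanh_one]
        ring
    _ ≤ 2 / cosh (a + x) + 1 / cosh (a + x) := by gcongr
    _ = 3 / cosh (a + x) := by ring

lemma mul_sq_entropyGap_tanh_one_le (a : ℝ) {x : ℝ} (hx : 0 ≤ x) :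
    (1 - |tanh a|) ^ 2 * entropyGap (tanh a) 1 x ^ 2 ≤ 9 * (1 / cosh (a + x) ^ 2) := by
  have gap_nonneg := entropyGap_tanh_one_nonneg a hx
  have margin_nonneg : 0 ≤ 1 - |tanh a| := sub_nonneg.2 (abs_tanh_lt_one a).le
  have margin_le : 1 - |tanh a| ≤ 1 + tanh a := by linarith [neg_abs_le (tanh a)]
  calc (1 - |tanh a|) ^ 2 * entropyGap (tanh a) 1 x ^ 2
      = ((1 - |tanh a|) * entropyGap (tanh a) 1 x) ^ 2 := (mul_pow _ _ 2).symm
    _ ≤ ((1 + tanh a) * entropyGap (tanh a) 1 x) ^ 2 := by gcongr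
    _ ≤ (3 / cosh (a + x)) ^ 2 := by
        gcongr
        · exact mul_nonneg (margin_nonneg.trans margin_le) gap_nonneg
        · exact one_add_tanh_mul_entropyGap_tanh_one_le a hx
    _ = 9 * (1 / cosh (a + x) ^ 2) := by ring

lemma mul_sq_entropyGap_tanh_sign_le (a : ℝ) {lam h : ℝ} (hlam : 0 ≤ lam) (hh : h ≠ 0) :
    (1 - |tanh a|) ^ 2 * entropyGap (tanh a) (sign h) (lam * h) ^ 2 ≤
      9 * (1 / cosh (a + lam * h) ^ 2) := by
  rcases hh.lt_or_gt with h_neg | h_pos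
  · have reflected := mul_sq_entropyGap_tanh_one_le (-a) (mul_nonneg hlam (neg_pos.2 h_neg).le)
    rwa [tanh_neg, abs_neg, mul_neg, ← neg_add, cosh_neg, ← neg_neg (1 : ℝ),
      entropyGap_neg_neg_neg, neg_neg, ← sign_of_neg h_neg] at reflected
  · rw [sign_of_pos h_pos]
    exact mul_sq_entropyGap_tanh_one_le a (mul_nonneg hlam h_pos.le)

section Mn

variable (a : ℝ) (n : ℕ) (hs : ℕ → ℝ)

lemma hasDerivAt_Mn_tanh (lam : ℝ) :
    HasDerivAt (Mn (tanh a) n hs)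
      (∑ i ∈ Finset.range n, (tanh (a + lam * hs i) - tanh a) * hs i) lam := by
  refine HasDerivAt.fun_sum fun i _ ↦ ?_
  exact HasDerivAt.comp (h₂ := gfun (tanh a)) lam (hasDerivAt_gfun_tanh a (lam * hs i))
    (hasDerivAt_mul_const (hs i))

lemma deriv_deriv_Mn_tanh (lam : ℝ) :
    deriv (deriv (Mn (tanh a) n hs)) lam =
      ∑ i ∈ Finset.range n, 1 / cosh (a + lam * hs i) ^ 2 * hs i ^ 2 := by
  rw [funext fun l ↦ (hasDerivAt_Mn_tanh a n hs l).deriv]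
  refine (HasDerivAt.fun_sum fun i _ ↦ ?_).deriv
  have tanh_comp := (hasDerivAt_tanh (a + lam * hs i)).comp lam
    ((hasDerivAt_mul_const (hs i)).const_add a)
  exact ((tanh_comp.sub_const (tanh a)).mul_const (hs i)).congr_deriv (by ring)

lemma GammaN_add_Mn_sub_eq_sum_entropyGap (lam : ℝ) :
    GammaN (tanh a) n hs + Mn (tanh a) n hs lam - lam * deriv (Mn (tanh a) n hs) lam =
      ∑ i ∈ Finset.range n, entropyGap (tanh a) (sign (hs i)) (lam * hs i) := by
  simp only [entropyGap, (hasDerivAt_gfun_tanh a _).deriv, (hasDerivAt_Mn_tanh a n hs lam).deriv,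
    GammaN, Mn, Finset.sum_sub_distrib, Finset.sum_add_distrib, Finset.sum_const,
    Finset.card_range, nsmul_eq_mul, mul_assoc, mul_comm (hs _), ← Finset.mul_sum]
  ring

lemma mul_sq_le_deriv_deriv_Mn_tanh {lam c : ℝ} (hlam : 0 ≤ lam) (hc : 0 < c)
    (h_sq : ∀ i < n, c ≤ hs i ^ 2) :
    c * (1 - |tanh a|) ^ 2 *
        (GammaN (tanh a) n hs + Mn (tanh a) n hs lam - lam * deriv (Mn (tanh a) n hs) lam) ^ 2 ≤
      9 * n * deriv (deriv (Mn (tanh a) n hs)) lam := by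
  set gap : ℕ → ℝ := fun i ↦ entropyGap (tanh a) (sign (hs i)) (lam * hs i)
  have termwise (i : ℕ) (hi : i ∈ Finset.range n) :
      c * ((1 - |tanh a|) ^ 2 * gap i ^ 2) ≤
        9 * (1 / cosh (a + lam * hs i) ^ 2 * hs i ^ 2) := by
    have hc_le := h_sq i (Finset.mem_range.1 hi)
    have h_ne : hs i ≠ 0 := sq_pos_iff.1 (hc.trans_le hc_le)
    calc c * ((1 - |tanh a|) ^ 2 * gap i ^ 2)
        ≤ hs i ^ 2 * (9 * (1 / cosh (a + lam * hs i) ^ 2)) :=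
          mul_le_mul hc_le (mul_sq_entropyGap_tanh_sign_le a hlam h_ne) (by positivity)
            (sq_nonneg _)
      _ = 9 * (1 / cosh (a + lam * hs i) ^ 2 * hs i ^ 2) := by ring
  have cauchy_schwarz :
      (∑ i ∈ Finset.range n, gap i) ^ 2 ≤ n * ∑ i ∈ Finset.range n, gap i ^ 2 := by
    simpa only [Finset.card_range] using sq_sum_le_card_mul_sum_sq (s := Finset.range n) (f := gap)
  rw [GammaN_add_Mn_sub_eq_sum_entropyGap, deriv_deriv_Mn_tanh]
  calc c * (1 - |tanh a|) ^ 2 * (∑ i ∈ Finset.range n, gap i) ^ 2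
      ≤ c * (1 - |tanh a|) ^ 2 * ((n : ℝ) * ∑ i ∈ Finset.range n, gap i ^ 2) := by gcongr
    _ = (n : ℝ) * ∑ i ∈ Finset.range n, c * ((1 - |tanh a|) ^ 2 * gap i ^ 2) := by
        simp only [← Finset.mul_sum]
        ring
    _ ≤ (n : ℝ) * ∑ i ∈ Finset.range n, 9 * (1 / cosh (a + lam * hs i) ^ 2 * hs i ^ 2) := by
        gcongr ?_ * ?_
        exact Finset.sum_le_sum termwise
    _ = 9 * n * ∑ i ∈ Finset.range n, 1 / cosh (a + lam * hs i) ^ 2 * hs i ^ 2 := by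
        rw [← Finset.mul_sum]
        ring

lemma deriv_deriv_Mn_tanh_le (lam : ℝ) :
    deriv (deriv (Mn (tanh a) n hs)) lam ≤ ∑ i ∈ Finset.range n, hs i ^ 2 := by
  rw [deriv_deriv_Mn_tanh]
  exact Finset.sum_le_sum fun i _ ↦
    mul_le_of_le_one_left (sq_nonneg _) (one_div_cosh_sq_le_one _)

lemma abs_deriv_deriv_Mn_tanh_sub_le (lam lam' : ℝ) :
    |deriv (deriv (Mn (tanh a) n hs)) lam - deriv (deriv (Mn (tanh a) n hs)) lam'| ≤
      2 * (∑ i ∈ Finset.range n, |hs i| ^ 3) * |lam - lam'| := by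
  rw [deriv_deriv_Mn_tanh, deriv_deriv_Mn_tanh, ← Finset.sum_sub_distrib, Finset.mul_sum,
    Finset.sum_mul]
  refine (Finset.abs_sum_le_sum_abs _ _).trans (Finset.sum_le_sum fun i _ ↦ ?_)
  rw [← sub_mul, abs_mul, abs_pow]
  calc |1 / cosh (a + lam * hs i) ^ 2 - 1 / cosh (a + lam' * hs i) ^ 2| * |hs i| ^ 2
      ≤ 2 * |a + lam * hs i - (a + lam' * hs i)| * |hs i| ^ 2 := by
        gcongr
        exact abs_one_div_cosh_sq_sub_le _ _
    _ = 2 * |hs i| ^ 3 * |lam - lam'| := by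
        rw [add_sub_add_left_eq_sub, ← sub_mul, abs_mul]
        ring

end Mn

lemma sq_le_two_pi_mul_deriv_deriv_Mn_tanh {ε a lam : ℝ} {n : ℕ} {hs : ℕ → ℝ} (hε : 0 < ε)
    (ha : |tanh a| ≤ 1 - 2 * ε) (hlam : 0 ≤ lam)
    (h_sq : ∀ i < n, 16 / ((n : ℝ) ^ 5 * ε ^ 8) ≤ 2 * π * hs i ^ 2) :
    4 / ((n : ℝ) ^ 6 * ε ^ 4) *
        (GammaN (tanh a) n hs + Mn (tanh a) n hs lam - lam * deriv (Mn (tanh a) n hs) lam) ^ 2 ≤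
      2 * π * deriv (deriv (Mn (tanh a) n hs)) lam := by
  rcases n.eq_zero_or_pos with rfl | n_pos
  · simp [deriv_deriv_Mn_tanh]
  have : (0 : ℝ) < n := Nat.cast_pos.2 n_pos
  have ε_le : ε ≤ 1 / 2 := by linarith [abs_nonneg (tanh a)]
  set X := GammaN (tanh a) n hs + Mn (tanh a) n hs lam - lam * deriv (Mn (tanh a) n hs) lam
  set c := 16 / ((n : ℝ) ^ 5 * ε ^ 8) / (2 * π) with c_def
  have lower : c * (1 - |tanh a|) ^ 2 * X ^ 2 ≤ 9 * n * deriv (deriv (Mn (tanh a) n hs)) lam :=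
    mul_sq_le_deriv_deriv_Mn_tanh a n hs hlam (by positivity) fun i hi ↦
      (div_le_iff₀' two_pi_pos).2 (h_sq i hi)
  have constants : 4 / ((n : ℝ) ^ 6 * ε ^ 4) ≤ 2 * π * (c * (2 * ε) ^ 2) / (9 * n) := by
    have constant_eq :
        2 * π * (c * (2 * ε) ^ 2) / (9 * n) = 64 / (9 * ε ^ 2) / (n ^ 6 * ε ^ 4) := by
      rw [c_def]
      field_simp
      norm_num
    rw [constant_eq]
    gcongr
    rw [le_div_iff₀ (by positivity)]
    nlinarith
  calc 4 / ((n : ℝ) ^ 6 * ε ^ 4) * X ^ 2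
      ≤ 2 * π * (c * (2 * ε) ^ 2) / (9 * n) * X ^ 2 := by gcongr
    _ ≤ 2 * π * (c * (1 - |tanh a|) ^ 2) / (9 * n) * X ^ 2 := by
        gcongr
        linarith
    _ = 2 * π * (c * (1 - |tanh a|) ^ 2 * X ^ 2 / (9 * n)) := by ring
    _ ≤ 2 * π * deriv (deriv (Mn (tanh a) n hs)) lam := by
        gcongr
        exact (div_le_iff₀' (by positivity)).2 lower

theorem stmt8_general (ε m : ℝ) (hε : 0 < ε) (hm : m ∈ Icc (-1 + 2 * ε) (1 - 2 * ε))
    (n : ℕ) (hs : ℕ → ℝ) :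
    ((∀ i < n, 16 / ((n : ℝ) ^ 5 * ε ^ 8) ≤ 2 * π * hs i ^ 2) → ∀ lam : ℝ, 0 ≤ lam →
      4 / ((n : ℝ) ^ 6 * ε ^ 4) *
          (GammaN m n hs + Mn m n hs lam - lam * deriv (Mn m n hs) lam) ^ 2 ≤
        2 * π * deriv (deriv (Mn m n hs)) lam) ∧
    (∀ lam : ℝ, deriv (deriv (Mn m n hs)) lam ≤ ∑ i ∈ Finset.range n, hs i ^ 2) ∧
    (∀ lam lam' : ℝ,
      |deriv (deriv (Mn m n hs)) lam - deriv (deriv (Mn m n hs)) lam'| ≤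
        2 * (∑ i ∈ Finset.range n, |hs i| ^ 3) * |lam - lam'|) := by
  obtain ⟨a, -, rfl⟩ := tanh_surjOn (show m ∈ Ioo (-1) 1 from
    ⟨by linarith [hm.1], by linarith [hm.2]⟩)
  have ha : |tanh a| ≤ 1 - 2 * ε := abs_le.2 ⟨by linarith [hm.1], hm.2⟩
  exact ⟨fun h_sq lam hlam ↦ sq_le_two_pi_mul_deriv_deriv_Mn_tanh hε ha hlam h_sq,
    deriv_deriv_Mn_tanh_le a n hs, abs_deriv_deriv_Mn_tanh_sub_le a n hs⟩

/-- bounds on `M''_n` for `h ∈ L^ε_n`, and the Lipschitz estimate for `M''_n`. -/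
theorem stmt8 (ε m : ℝ) (hε : ε ∈ Set.Ioo (0 : ℝ) (1/2))
    (hm : m ∈ Set.Icc (-1 + 2*ε) (1 - 2*ε)) (n : ℕ) (hs : ℕ → ℝ)
    (hL : hs ∈ Lset m ε n) :
    (∀ lam : ℝ, 0 < lam →
      4 / ((n : ℝ)^6 * ε^4) *
          (GammaN m n hs + Mn m n hs lam - lam * deriv (Mn m n hs) lam)^2 ≤
        2 * π * deriv (deriv (Mn m n hs)) lam ∧
      2 * π * deriv (deriv (Mn m n hs)) lam ≤ (n : ℝ) ^ ((3:ℝ)/2)) ∧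
    (∀ lam lam' : ℝ,
      |deriv (deriv (Mn m n hs)) lam - deriv (deriv (Mn m n hs)) lam'| ≤
        2 * (∑ i ∈ Finset.range n, |hs i|^3) * |lam - lam'|) := by
  obtain ⟨lower, upper, lipschitz⟩ := stmt8_general ε m hε.1 hm n hs
  exact ⟨fun lam hlam ↦ ⟨lower hL.2.1 lam hlam.le,
    (mul_le_mul_of_nonneg_left (upper lam) two_pi_pos.le).trans hL.1⟩, lipschitz⟩
end
end

section
/- Fix ε ∈ (0,1/2) and m ∈ [−1+2ε, 1−2ε], and let N_ε be as in the lemma guaranteeing C⁻_n > 0 and Γ_n(h) − C⁺_n ≥ ε²n/2 (e.g. N_ε = −log(ε)/ε⁵ + 100). For n > N_ε, C ∈ (εΓ_n(h), (1−ε)Γ_n(h)), C⁺_n = C + 2 log n, C⁻_n = C − (3/4) log n, define A⁺_n(h) = A_n(h, C⁺_n) and A⁻_n(h) = A_n(h, C⁻_n). Then for every n > N_ε and every h ∈ L^ε_n, |A⁺_n(h) − A⁻_n(h)| ≤ n^{3/4}·√(log n). -/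
open MeasureTheory Real Filter Set
open scoped Topology BigOperators

noncomputable section

/-- `M*_n(h,a) = sup_{λ∈ℝ}(λa − M_n(h,λ))`. -/
def MstarN (m : ℝ) (n : ℕ) (hs : ℕ → ℝ) (a : ℝ) : ℝ :=
  ⨆ lam : ℝ, (lam * a - Mn m n hs lam)

/-!
Since `M_n(h, ·) ≥ 0`, the terms of the two suprema satisfy `λa − M_n ≤ (a/b)(λb − M_n)` for
`0 ≤ a ≤ b`, so `M*_n(h, a) / a` is nondecreasing in `a`. With `a = A⁻_n(h)` and `b = A⁺_n(h)` this
reads `b − a ≤ a (C⁺_n − C⁻_n) / C⁻_n`. Here `a < Σ_n(h) < n^{3/2}`, the difference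
`C⁺_n − C⁻_n` is `(11/4) log n`, and `C⁻_n ≥ ε² n / 2` because `Γ_n(h) ≥ ε n`; hence `b − a` is
`O(√n log n)`, which is eventually below `n^{3/4} √(log n)`.
-/

section LegendreTransform

/-- The Legendre transform `f*(a) = sup_λ (λ a − f λ)` of a real function, of which `M*_n(h, ·)` is
an instance. It is real-valued, so it takes the junk value `0` where the supremum is infinite. -/
def legendreTransform (f : ℝ → ℝ) (a : ℝ) : ℝ :=
  ⨆ lam : ℝ, (lam * a - f lam)

variable {f : ℝ → ℝ} {a b : ℝ}

theorem bddAbove_range_of_legendreTransform_ne_zero (h : legendreTransform f a ≠ 0) :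
    BddAbove (range fun lam : ℝ => lam * a - f lam) := by
  by_contra hunbounded
  exact h (Real.iSup_of_not_bddAbove hunbounded)

theorem mul_legendreTransform_le_mul_legendreTransform (hf : ∀ lam, 0 ≤ f lam) (ha : 0 ≤ a)
    (hab : a ≤ b) (hbdd : BddAbove (range fun lam : ℝ => lam * b - f lam)) :
    b * legendreTransform f a ≤ a * legendreTransform f b := by
  unfold legendreTransform
  rw [Real.mul_iSup_of_nonneg (ha.trans hab)]
  refine ciSup_le fun lam => ?_
  calc b * (lam * a - f lam) ≤ a * (lam * b - f lam) := by
        linarith [mul_le_mul_of_nonneg_right hab (hf lam)]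
    _ ≤ a * ⨆ lam : ℝ, (lam * b - f lam) := by
        gcongr
        exact le_ciSup hbdd lam

theorem le_of_legendreTransform_le (hf : ∀ lam, 0 ≤ f lam) (hb : 0 ≤ b)
    (hpos : 0 < legendreTransform f a) (hle : legendreTransform f a ≤ legendreTransform f b) :
    a ≤ b := by
  by_contra! hba
  have hratio := mul_legendreTransform_le_mul_legendreTransform hf hb hba.le
    (bddAbove_range_of_legendreTransform_ne_zero hpos.ne')
  have hmul : a * legendreTransform f b ≤ b * legendreTransform f b :=
    hratio.trans (by gcongr)
  exact hba.not_ge (le_of_mul_le_mul_right hmul (hpos.trans_le hle))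

theorem abs_sub_le_of_legendreTransform_le (hf : ∀ lam, 0 ≤ f lam) (ha : 0 ≤ a) (hb : 0 ≤ b)
    (hpos : 0 < legendreTransform f a) (hle : legendreTransform f a ≤ legendreTransform f b) :
    |b - a| ≤ a * (legendreTransform f b - legendreTransform f a) / legendreTransform f a := by
  have hab : a ≤ b := le_of_legendreTransform_le hf hb hpos hle
  have hratio := mul_legendreTransform_le_mul_legendreTransform hf ha hab
    (bddAbove_range_of_legendreTransform_ne_zero (hpos.trans_le hle).ne')
  rw [abs_of_nonneg (sub_nonneg.2 hab), le_div_iff₀ hpos]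
  linarith

end LegendreTransform

section LogarithmicMoment

variable {m : ℝ}

-- Jensen's inequality for the centred two-point law behind `gfun`, via `x + 1 ≤ exp x`.
theorem gfun_nonneg (hm : |m| ≤ 1) (lam : ℝ) : 0 ≤ gfun m lam := by
  obtain ⟨hm_lower, hm_upper⟩ := abs_le.1 hm
  have hplus : 0 ≤ (1 + m) / 2 := by linarith
  have hminus : 0 ≤ (1 - m) / 2 := by linarith
  refine Real.log_nonneg ?_
  calc (1 : ℝ) = (1 + m) / 2 * (lam * (1 - m) + 1) + (1 - m) / 2 * (-(lam * (1 + m)) + 1) := by ring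
    _ ≤ (1 + m) / 2 * Real.exp (lam * (1 - m)) + (1 - m) / 2 * Real.exp (-(lam * (1 + m))) :=
        add_le_add (mul_le_mul_of_nonneg_left (Real.add_one_le_exp _) hplus)
          (mul_le_mul_of_nonneg_left (Real.add_one_le_exp _) hminus)

theorem Mn_nonneg (hm : |m| ≤ 1) (n : ℕ) (hs : ℕ → ℝ) (lam : ℝ) : 0 ≤ Mn m n hs lam :=
  Finset.sum_nonneg fun _ _ => gfun_nonneg hm _

theorem abs_sub_le_of_MstarN_le (hm : |m| ≤ 1) {n : ℕ} {hs : ℕ → ℝ} {a b : ℝ} (ha : 0 ≤ a)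
    (hb : 0 ≤ b) (hpos : 0 < MstarN m n hs a) (hle : MstarN m n hs a ≤ MstarN m n hs b) :
    |b - a| ≤ a * (MstarN m n hs b - MstarN m n hs a) / MstarN m n hs a :=
  abs_sub_le_of_legendreTransform_le (Mn_nonneg hm n hs) ha hb hpos hle

end LogarithmicMoment

section Levels

variable {m : ℝ}

theorem log_one_add_sign_mul_le (hm : |m| < 1) (x : ℝ) :
    Real.log (1 + Real.sign x * m) ≤ Real.log 2 - (1 - |m|) / 2 := by
  have hsign : |Real.sign x * m| ≤ |m| := by
    rcases Real.sign_apply_eq x with h | h | h <;> simp [h]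
  obtain ⟨hlower, hupper⟩ := abs_le.1 hsign
  have hpos : 0 < 1 + Real.sign x * m := by linarith
  have hlog := Real.log_le_sub_one_of_pos (half_pos hpos)
  rw [Real.log_div hpos.ne' two_ne_zero] at hlog
  linarith

theorem mul_half_one_sub_abs_le_GammaN (hm : |m| < 1) (n : ℕ) (hs : ℕ → ℝ) :
    n * ((1 - |m|) / 2) ≤ GammaN m n hs := by
  have hsum := Finset.sum_le_card_nsmul (Finset.range n) _ _
    fun i _ => log_one_add_sign_mul_le hm (hs i)
  rw [Finset.card_range, nsmul_eq_mul] at hsum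
  unfold GammaN
  linarith

theorem half_sq_mul_lt_levels {ε C : ℝ} {n : ℕ} {hs : ℕ → ℝ} (hε : 0 < ε) (hm : |m| ≤ 1 - 2 * ε)
    (hlog : Real.log n ≤ ε ^ 2 / 4 * n)
    (hC : C ∈ Ioo (ε * GammaN m n hs) ((1 - ε) * GammaN m n hs)) :
    ε ^ 2 * n / 2 < C - 3 / 4 * Real.log n ∧
      C + 2 * Real.log n < GammaN m n hs - ε ^ 2 * n / 2 := by
  have hGamma : ε ^ 2 * n ≤ ε * GammaN m n hs := calc
    ε ^ 2 * n = ε * (n * ε) := by ring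
    _ ≤ ε * (n * ((1 - |m|) / 2)) := by gcongr; linarith
    _ ≤ ε * GammaN m n hs := by
        gcongr
        exact mul_half_one_sub_abs_le_GammaN (by linarith) n hs
  have hlog_nonneg : 0 ≤ Real.log n := Real.log_natCast_nonneg n
  constructor <;> linarith [hC.1, hC.2]

end Levels

section Asymptotics

theorem rpow_three_halves_eq_mul_sqrt {x : ℝ} (hx : 0 ≤ x) : x ^ ((3 : ℝ) / 2) = x * √x := by
  rw [Real.sqrt_eq_rpow, ← Real.rpow_one_add' hx] <;> norm_num

theorem isLittleO_sqrt_mul_log :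
    (fun x : ℝ => √x * Real.log x) =o[atTop] fun x : ℝ => x ^ ((3 : ℝ) / 4) * √(Real.log x) := by
  have hsqrt_log : (fun x : ℝ => √(Real.log x)) =o[atTop] fun x : ℝ => x ^ ((1 : ℝ) / 4) := by
    simpa only [Real.sqrt_eq_rpow, one_div] using
      isLittleO_log_rpow_rpow_atTop (1 / 2) (show (0 : ℝ) < 1 / 4 by norm_num)
  refine ((Asymptotics.isBigO_refl (fun x : ℝ => √x * √(Real.log x)) atTop).mul_isLittleO
    hsqrt_log).congr' ?_ ?_
  · filter_upwards [eventually_ge_atTop 1] with x hx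
    rw [mul_assoc, Real.mul_self_sqrt (Real.log_nonneg hx)]
  · filter_upwards [eventually_gt_atTop 0] with x hx
    have hexp : √x * x ^ ((1 : ℝ) / 4) = x ^ ((3 : ℝ) / 4) := by
      rw [Real.sqrt_eq_rpow, ← Real.rpow_add hx]
      norm_num
    rw [mul_right_comm, hexp]

theorem eventually_log_le_mul {c : ℝ} (hc : 0 < c) : ∀ᶠ x : ℝ in atTop, Real.log x ≤ c * x := by
  filter_upwards [Real.isLittleO_log_id_atTop.bound hc, eventually_ge_atTop 0] with x hx hx0
  rw [id, Real.norm_of_nonneg hx0] at hx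
  exact (Real.le_norm_self _).trans hx

theorem eventually_mul_sqrt_mul_log_le {K : ℝ} (hK : 0 < K) :
    ∀ᶠ x : ℝ in atTop, K * (√x * Real.log x) ≤ x ^ ((3 : ℝ) / 4) * √(Real.log x) := by
  filter_upwards [isLittleO_sqrt_mul_log.bound (inv_pos.2 hK), eventually_ge_atTop 0] with x hx hx0
  rw [Real.norm_of_nonneg (by positivity : 0 ≤ x ^ ((3 : ℝ) / 4) * √(Real.log x)),
    ← div_eq_inv_mul, le_div_iff₀' hK] at hx
  exact (mul_le_mul_of_nonneg_left (Real.le_norm_self _) hK.le).trans hx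

end Asymptotics

theorem stmt11_general (ε : ℝ) (hε : 0 < ε) :
    ∃ N : ℝ, 0 < N ∧ ∀ m ∈ Set.Icc (-1 + 2 * ε) (1 - 2 * ε), ∀ n : ℕ, N < n → ∀ hs : ℕ → ℝ,
      SigmaN m n hs ≤ (n : ℝ) ^ ((3 : ℝ) / 2) → ∀ C : ℝ,
      C ∈ Set.Ioo (ε * GammaN m n hs) ((1 - ε) * GammaN m n hs) →
      ∀ A : ℝ → ℝ,
        (∀ c ∈ Set.Ioo 0 (GammaN m n hs),
          A c ∈ Set.Ioo 0 (SigmaN m n hs) ∧ MstarN m n hs (A c) = c) →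
        |A (C + 2 * Real.log n) - A (C - 3 / 4 * Real.log n)| ≤
          (n : ℝ) ^ ((3 : ℝ) / 4) * √(Real.log n) := by
  obtain ⟨N₀, hN₀⟩ := eventually_atTop.1
    ((eventually_log_le_mul (show 0 < ε ^ 2 / 4 by positivity)).and
      (eventually_mul_sqrt_mul_log_le (show 0 < 11 / (2 * ε ^ 2) by positivity)))
  refine ⟨max N₀ 1, by positivity, fun m hm n hn hs hSigma C hC A hA => ?_⟩
  obtain ⟨hlog, hsqrt_log⟩ := hN₀ n ((le_max_left _ _).trans hn.le)
  have hn0 : (0 : ℝ) < n := zero_lt_one.trans ((le_max_right _ _).trans_lt hn)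
  have hm_abs : |m| ≤ 1 - 2 * ε := abs_le.2 ⟨by linarith [hm.1], hm.2⟩
  have hlog_nonneg : 0 ≤ Real.log n := Real.log_natCast_nonneg n
  have hgap : 0 < ε ^ 2 * n / 2 := by positivity
  obtain ⟨hlower, hupper⟩ := half_sq_mul_lt_levels hε hm_abs hlog hC
  obtain ⟨⟨ha, ha_lt⟩, hMa⟩ := hA (C - 3 / 4 * Real.log n) ⟨by linarith, by linarith⟩
  obtain ⟨⟨hb, -⟩, hMb⟩ := hA (C + 2 * Real.log n) ⟨by linarith, by linarith⟩
  set a := A (C - 3 / 4 * Real.log n)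
  set b := A (C + 2 * Real.log n)
  calc |b - a| ≤ a * (MstarN m n hs b - MstarN m n hs a) / MstarN m n hs a :=
        abs_sub_le_of_MstarN_le (by linarith) ha.le hb.le (by linarith) (by linarith)
    _ = a * (11 / 4 * Real.log n) / (C - 3 / 4 * Real.log n) := by rw [hMa, hMb]; ring
    _ ≤ (n : ℝ) ^ ((3 : ℝ) / 2) * (11 / 4 * Real.log n) / (ε ^ 2 * n / 2) := by
        gcongr
        exact ha_lt.le.trans hSigma
    _ = 11 / (2 * ε ^ 2) * (√n * Real.log n) := by
        rw [rpow_three_halves_eq_mul_sqrt hn0.le]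
        field_simp
        ring
    _ ≤ _ := hsqrt_log

/-- with `C⁺_n = C + 2 log n`, `C⁻_n = C − (3/4) log n` and `A_n(h,·)`
the inverse of `M*_n(h,·)`, for `n > N_ε` and `h ∈ L^ε_n`,
`|A⁺_n(h) − A⁻_n(h)| ≤ n^{3/4} √(log n)`. -/
theorem stmt11 (ε m : ℝ) (hε : ε ∈ Set.Ioo (0 : ℝ) (1/2))
    (hm : m ∈ Set.Icc (-1 + 2*ε) (1 - 2*ε)) :
    ∃ N : ℝ, 0 < N ∧ ∀ n : ℕ, N < n → ∀ hs ∈ Lset m ε n, ∀ C : ℝ,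
      C ∈ Set.Ioo (ε * GammaN m n hs) ((1 - ε) * GammaN m n hs) →
      ∀ A : ℝ → ℝ,
        (∀ c ∈ Set.Ioo 0 (GammaN m n hs),
          A c ∈ Set.Ioo 0 (SigmaN m n hs) ∧ MstarN m n hs (A c) = c) →
        |A (C + 2 * Real.log n) - A (C - 3/4 * Real.log n)| ≤
          (n : ℝ) ^ ((3:ℝ)/4) * Real.sqrt (Real.log n) := by
  obtain ⟨N, hN, hbound⟩ := stmt11_general ε hε.1
  exact ⟨N, hN, fun n hn hs hL => hbound m hm n hn hs hL.2.2.2.le⟩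
end
end
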